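/- arXiv:2605.30491 — 4 statements merged into one kernel-verified Lean document; each statement's English description precedes it below -/
import Mathlib

section
/- Let Θ be a nonempty finite index set, let ε ∈ (0,1), let Λ : Θ → ℝ with Λ_ϑ ≥ 0 for all ϑ, and let μ : Θ → ℝ with μ_ϑ > 0 for all ϑ. Then ∑_{ϑ∈Θ} Λ_ϑ/μ_ϑ ≤ 1 − ε if and only if there exists φ : Θ → ℝ with φ_ϑ ≥ 0 for all ϑ such that (μ_ϑ, φ_ϑ, 1) satisfies the rotated quadratic cone condition for every ϑ ∈ Θ (i.e. μ_ϑ ≥ 0, φ_ϑ ≥ 0 and μ_ϑ·φ_ϑ ≥ 1) and 1 − ∑_{ϑ∈Θ} Λ_ϑ·φ_ϑ ≥ ε. (This is the exactness of the conic lifting of the ISR stability constraint.) -/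
/-!
Since `μ ϑ > 0`, the cone condition `μ ϑ * φ ϑ ≥ 1` says exactly that `φ ϑ` is an upper bound for
`(μ ϑ)⁻¹`. As `Λ ≥ 0`, replacing `φ` by `μ⁻¹` only decreases `∑ Λ ϑ * φ ϑ`, so a feasible `φ`
exists if and only if `φ = μ⁻¹` is feasible, which is the original constraint.
-/

/-- Exactness of the conic lifting of the ISR stability constraint. -/
theorem isr_stability_conic_lifting
    {Θ : Type*} [Fintype Θ] [Nonempty Θ]
    (ε : ℝ) (hε0 : 0 < ε) (hε1 : ε < 1)
    (Λ : Θ → ℝ) (hΛ : ∀ ϑ, 0 ≤ Λ ϑ)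
    (μ : Θ → ℝ) (hμ : ∀ ϑ, 0 < μ ϑ) :
    (∑ ϑ, Λ ϑ / μ ϑ ≤ 1 - ε) ↔
      ∃ φ : Θ → ℝ, (∀ ϑ, 0 ≤ φ ϑ) ∧
        (∀ ϑ, 0 ≤ μ ϑ ∧ 0 ≤ φ ϑ ∧ μ ϑ * φ ϑ ≥ 1) ∧
        1 - ∑ ϑ, Λ ϑ * φ ϑ ≥ ε := by
  constructor
  · intro h
    -- The cone constraint is tight at the witness `φ = 1 / μ`.
    refine ⟨fun ϑ => (μ ϑ)⁻¹, fun ϑ => (inv_pos.mpr (hμ ϑ)).le, fun ϑ =>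
      ⟨(hμ ϑ).le, (inv_pos.mpr (hμ ϑ)).le, (mul_inv_cancel₀ (hμ ϑ).ne').ge⟩, ?_⟩
    simp only [div_eq_mul_inv] at h
    linarith
  · rintro ⟨φ, -, hcone, hsum⟩
    have hle : ∑ ϑ, Λ ϑ / μ ϑ ≤ ∑ ϑ, Λ ϑ * φ ϑ := by
      refine Finset.sum_le_sum fun ϑ _ => ?_
      rw [div_eq_mul_inv]
      exact mul_le_mul_of_nonneg_left
        ((inv_le_iff_one_le_mul₀' (hμ ϑ)).mpr (hcone ϑ).2.2) (hΛ ϑ)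
    linarith
end

section
/- Let Θ be a nonempty finite index set, let Λ > 0 be a real number, let Λ' : Θ → ℝ with Λ'_ϑ ≥ 0 for all ϑ, let μ : Θ → ℝ with μ_ϑ ≥ 0 for all ϑ, and let τ ≥ 0. Then the following are equivalent: (a) μ_ϑ > Λ'_ϑ for all ϑ ∈ Θ and τ ≥ ∑_{ϑ∈Θ} Λ'_ϑ / (Λ·(μ_ϑ − Λ'_ϑ)); (b) there exists t : Θ → ℝ with t_ϑ ≥ 0 for all ϑ such that for every ϑ ∈ Θ the triple (Λ·(μ_ϑ − Λ'_ϑ), t_ϑ, 1) satisfies the rotated quadratic cone condition (i.e. Λ·(μ_ϑ − Λ'_ϑ) ≥ 0, t_ϑ ≥ 0 and Λ·(μ_ϑ − Λ'_ϑ)·t_ϑ ≥ 1), and τ ≥ ∑_{ϑ∈Θ} Λ'_ϑ·t_ϑ. (This is the exactness of the conic lifting of the expected sojourn time under the disaggregated service regime.) -/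
/-!
The cone constraint `Λ (μ ϑ - Λ' ϑ) * t ϑ ≥ 1` cannot hold with a vanishing first factor, so it
forces strict stability `Λ' ϑ < μ ϑ`; it then says exactly `t ϑ ≥ (Λ (μ ϑ - Λ' ϑ))⁻¹`. Since the
weights `Λ' ϑ` are nonnegative, the sum of the `Λ' ϑ * t ϑ` is minimised by equality, where it is
the expected sojourn time.
-/

/-- Exactness of the conic lifting of the expected sojourn time under the
disaggregated service regime (DSR). -/
theorem dsr_sojourn_conic_lifting
    {Θ : Type*} [Fintype Θ] [Nonempty Θ]
    (Λ : ℝ) (hΛ : 0 < Λ)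
    (Λ' : Θ → ℝ) (hΛ' : ∀ ϑ, 0 ≤ Λ' ϑ)
    (μ : Θ → ℝ) (hμ : ∀ ϑ, 0 ≤ μ ϑ)
    (τ : ℝ) (hτ : 0 ≤ τ) :
    ((∀ ϑ, Λ' ϑ < μ ϑ) ∧ τ ≥ ∑ ϑ, Λ' ϑ / (Λ * (μ ϑ - Λ' ϑ))) ↔
      ∃ t : Θ → ℝ, (∀ ϑ, 0 ≤ t ϑ) ∧
        (∀ ϑ, 0 ≤ Λ * (μ ϑ - Λ' ϑ) ∧ 0 ≤ t ϑ ∧ Λ * (μ ϑ - Λ' ϑ) * t ϑ ≥ 1) ∧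
        τ ≥ ∑ ϑ, Λ' ϑ * t ϑ := by
  have pos_of_cone : ∀ (t : Θ → ℝ) ϑ, 0 ≤ Λ * (μ ϑ - Λ' ϑ) →
      Λ * (μ ϑ - Λ' ϑ) * t ϑ ≥ 1 → 0 < Λ * (μ ϑ - Λ' ϑ) := by
    intro t ϑ h0 h1
    refine lt_of_le_of_ne h0 fun h => ?_
    rw [← h, zero_mul] at h1
    linarith
  constructor
  · rintro ⟨hstab, hsum⟩
    have hpos : ∀ ϑ, 0 < Λ * (μ ϑ - Λ' ϑ) := fun ϑ => mul_pos hΛ (sub_pos.2 (hstab ϑ))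
    -- The smallest feasible lifting variable makes every cone constraint tight.
    refine ⟨fun ϑ => (Λ * (μ ϑ - Λ' ϑ))⁻¹, fun ϑ => (inv_pos.2 (hpos ϑ)).le,
      fun ϑ => ⟨(hpos ϑ).le, (inv_pos.2 (hpos ϑ)).le, ?_⟩, ?_⟩
    · exact (mul_inv_cancel₀ (hpos ϑ).ne').ge
    · simpa only [div_eq_mul_inv] using hsum
  · rintro ⟨t, -, hcone, hsum⟩
    have hpos : ∀ ϑ, 0 < Λ * (μ ϑ - Λ' ϑ) := fun ϑ =>
      pos_of_cone t ϑ (hcone ϑ).1 (hcone ϑ).2.2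
    refine ⟨fun ϑ => sub_pos.1 (pos_of_mul_pos_right (hpos ϑ) hΛ.le), ?_⟩
    refine le_trans (Finset.sum_le_sum fun ϑ _ => ?_) hsum
    rw [div_eq_mul_inv]
    exact mul_le_mul_of_nonneg_left
      ((inv_le_iff_one_le_mul₀' (hpos ϑ)).2 (hcone ϑ).2.2) (hΛ' ϑ)
end

section
/- Let Θ be a nonempty finite index set, let Λ > 0 be a real number, let Λ' : Θ → ℝ with Λ'_ϑ ≥ 0 for all ϑ, let μ : Θ → ℝ with μ_ϑ ≥ 0 for all ϑ, and let τ ≥ 0. Then the following are equivalent: (a) μ_ϑ > 0 for all ϑ, ∑_{ϑ∈Θ} Λ'_ϑ/μ_ϑ < 1, and τ ≥ (1/Λ)·∑_{ϑ∈Θ} Λ'_ϑ/μ_ϑ + (∑_{ϑ∈Θ} Λ'_ϑ/μ_ϑ²) / (1 − ∑_{ϑ∈Θ} Λ'_ϑ/μ_ϑ); (b) there exist φ, t, ϱ : Θ → ℝ, all with nonnegative values, such that for every ϑ ∈ Θ: μ_ϑ·φ_ϑ ≥ 1, Λ·μ_ϑ·t_ϑ ≥ 1, 1 − ∑_{δ∈Θ}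 Λ'_δ·φ_δ ≥ 0, (1 − ∑_{δ∈Θ} Λ'_δ·φ_δ)·ϱ_ϑ ≥ φ_ϑ², and moreover τ ≥ ∑_{ϑ∈Θ} Λ'_ϑ·(t_ϑ + ϱ_ϑ). (This is the exactness of the conic lifting of the expected sojourn time under the integrated service regime.) -/
/-!
Minimising the lifted variables one at a time gives `φ = 1/μ`, `t = 1/(Λ μ)` and
`ϱ = φ² / (1 - ∑ Λ' φ)`, and at this choice `∑ Λ' (t + ϱ)` is exactly the expected sojourn time
(`sojourn_eq_sum`). Every feasible point dominates this choice coordinatewise, since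
`φ² / (1 - ∑ Λ' φ)` is monotone in `φ`. Stability `∑ Λ'/μ < 1` is strict because a vanishing
idle capacity `1 - ∑ Λ' φ` would force `φ = 0` in the rotated cone constraint, contradicting
`μ φ ≥ 1`; this is where nonemptiness of the index set enters.
-/

/-- The sojourn time, distributed over the classes with `t = 1/(Λ μ)` and `ϱ = (1/μ)²/c`, where
`c` is the idle capacity. -/
lemma sojourn_eq_sum {Θ : Type*} [Fintype Θ] (Λ c : ℝ) (Λ' μ : Θ → ℝ) :
    (1 / Λ) * ∑ ϑ, Λ' ϑ / μ ϑ + (∑ ϑ, Λ' ϑ / (μ ϑ) ^ 2) / c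
      = ∑ ϑ, Λ' ϑ * (1 / (Λ * μ ϑ) + (1 / μ ϑ) ^ 2 / c) := by
  rw [Finset.mul_sum, Finset.sum_div, ← Finset.sum_add_distrib]
  refine Finset.sum_congr rfl fun ϑ _ => ?_
  simp only [div_eq_mul_inv, mul_inv, one_mul, inv_pow]
  ring

/-- Exactness of the conic lifting of the expected sojourn time under the
integrated service regime (ISR). -/
theorem isr_sojourn_conic_lifting
    {Θ : Type*} [Fintype Θ] [Nonempty Θ]
    (Λ : ℝ) (hΛ : 0 < Λ)
    (Λ' : Θ → ℝ) (hΛ' : ∀ ϑ, 0 ≤ Λ' ϑ)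
    (μ : Θ → ℝ) (hμ : ∀ ϑ, 0 ≤ μ ϑ)
    (τ : ℝ) (hτ : 0 ≤ τ) :
    ((∀ ϑ, 0 < μ ϑ) ∧ (∑ ϑ, Λ' ϑ / μ ϑ) < 1 ∧
      τ ≥ (1 / Λ) * ∑ ϑ, Λ' ϑ / μ ϑ
            + (∑ ϑ, Λ' ϑ / (μ ϑ) ^ 2) / (1 - ∑ ϑ, Λ' ϑ / μ ϑ)) ↔
    ∃ φ t ϱ : Θ → ℝ,
      (∀ ϑ, 0 ≤ φ ϑ) ∧ (∀ ϑ, 0 ≤ t ϑ) ∧ (∀ ϑ, 0 ≤ ϱ ϑ) ∧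
      (∀ ϑ, μ ϑ * φ ϑ ≥ 1) ∧
      (∀ ϑ, Λ * μ ϑ * t ϑ ≥ 1) ∧
      (1 - ∑ δ, Λ' δ * φ δ ≥ 0) ∧
      (∀ ϑ, (1 - ∑ δ, Λ' δ * φ δ) * ϱ ϑ ≥ (φ ϑ) ^ 2) ∧
      τ ≥ ∑ ϑ, Λ' ϑ * (t ϑ + ϱ ϑ) := by
  rw [sojourn_eq_sum]
  constructor
  · rintro ⟨hpos, hS, hle⟩
    have hS' : ∑ δ, Λ' δ * (1 / μ δ) = ∑ δ, Λ' δ / μ δ :=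
      Finset.sum_congr rfl fun δ _ => mul_one_div _ _
    have hc : 0 < 1 - ∑ δ, Λ' δ / μ δ := by linarith
    refine ⟨fun ϑ => 1 / μ ϑ, fun ϑ => 1 / (Λ * μ ϑ),
      fun ϑ => (1 / μ ϑ) ^ 2 / (1 - ∑ δ, Λ' δ / μ δ), fun ϑ => ?_, fun ϑ => ?_, fun ϑ => ?_,
      fun ϑ => ?_, fun ϑ => ?_, ?_, fun ϑ => ?_, hle⟩
    · exact one_div_nonneg.2 (hμ ϑ)
    · exact one_div_nonneg.2 (mul_nonneg hΛ.le (hμ ϑ))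
    · exact div_nonneg (sq_nonneg _) hc.le
    · exact (mul_one_div_cancel (hpos ϑ).ne').ge
    · exact (mul_one_div_cancel (mul_pos hΛ (hpos ϑ)).ne').ge
    · rw [hS']
      exact hc.le
    · rw [hS']
      exact (mul_div_cancel₀ _ hc.ne').ge
  · rintro ⟨φ, t, ϱ, hφ, -, -, hμφ, ht, hc, hcone, hle⟩
    have hpos : ∀ ϑ, 0 < μ ϑ := fun ϑ =>
      (hμ ϑ).lt_of_ne' fun h => by
        have := hμφ ϑ
        rw [h, zero_mul] at this
        linarith
    have hφ_ge : ∀ ϑ, 1 / μ ϑ ≤ φ ϑ := fun ϑ => (div_le_iff₀' (hpos ϑ)).2 (hμφ ϑ)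
    have hφ_pos : ∀ ϑ, 0 < φ ϑ := fun ϑ => (one_div_pos.2 (hpos ϑ)).trans_le (hφ_ge ϑ)
    have hc_pos : 0 < 1 - ∑ δ, Λ' δ * φ δ := by
      refine lt_of_le_of_ne hc fun h => ?_
      obtain ⟨ϑ⟩ := ‹Nonempty Θ›
      have h1 := hcone ϑ
      rw [← h, zero_mul] at h1
      exact absurd h1 (not_le.2 (pow_pos (hφ_pos ϑ) 2))
    have hS : ∑ δ, Λ' δ / μ δ ≤ ∑ δ, Λ' δ * φ δ := by
      refine Finset.sum_le_sum fun δ _ => ?_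
      rw [← mul_one_div]
      exact mul_le_mul_of_nonneg_left (hφ_ge δ) (hΛ' δ)
    refine ⟨hpos, by linarith, le_trans (Finset.sum_le_sum fun ϑ _ => ?_) hle⟩
    refine mul_le_mul_of_nonneg_left (add_le_add ?_ ?_) (hΛ' ϑ)
    · exact (div_le_iff₀' (mul_pos hΛ (hpos ϑ))).2 (ht ϑ)
    · calc (1 / μ ϑ) ^ 2 / (1 - ∑ δ, Λ' δ / μ δ)
          ≤ φ ϑ ^ 2 / (1 - ∑ δ, Λ' δ * φ δ) :=
            div_le_div₀ (sq_nonneg _)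
              (pow_le_pow_left₀ (one_div_nonneg.2 (hμ ϑ)) (hφ_ge ϑ) 2) hc_pos (by linarith)
        _ ≤ ϱ ϑ := (div_le_iff₀' hc_pos).2 (hcone ϑ)
end

section
/- Let Θ be a nonempty finite index set, let ε ∈ (0,1), let c : Θ → ℝ with c_ϑ > 0 for all ϑ, let Λ : Θ → ℝ with Λ_ϑ > 0 for all ϑ, and let Γ be a real number. Then there exists μ : Θ → ℝ satisfying μ_ϑ > 0 for all ϑ, ∑_{ϑ∈Θ} Λ_ϑ/μ_ϑ ≤ 1 − ε, and ∑_{ϑ∈Θ} c_ϑ·μ_ϑ ≤ Γ if and only if Γ ≥ (1/(1−ε))·(∑_{ϑ∈Θ} √(c_ϑ·Λ_ϑ))². (Feasibility of the budget-constrained capacity problem under the integrated service regime.) -/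
/-!
Necessity is the Cauchy–Schwarz inequality
`(∑ √(c Λ))² ≤ (∑ Λ / μ) (∑ c μ)`, since `c Λ = (Λ / μ) (c μ)`. For sufficiency, its equality case
forces `c μ` to be proportional to `Λ / μ`, i.e. `μ` to be proportional to `√(c Λ) / c`; scaling so
that the stability constraint is tight makes the cost exactly `(∑ √(c Λ))² / (1 - ε)`.
-/

/-- Feasibility of the budget-constrained capacity problem under the
integrated service regime (ISR). -/
theorem isr_budget_feasibility
    {Θ : Type*} [Fintype Θ] [Nonempty Θ]
    (ε : ℝ) (hε0 : 0 < ε) (hε1 : ε < 1)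
    (c : Θ → ℝ) (hc : ∀ ϑ, 0 < c ϑ)
    (Λ : Θ → ℝ) (hΛ : ∀ ϑ, 0 < Λ ϑ)
    (Γ : ℝ) :
    (∃ μ : Θ → ℝ, (∀ ϑ, 0 < μ ϑ) ∧ (∑ ϑ, Λ ϑ / μ ϑ ≤ 1 - ε) ∧
        ∑ ϑ, c ϑ * μ ϑ ≤ Γ) ↔
      Γ ≥ (1 / (1 - ε)) * (∑ ϑ, Real.sqrt (c ϑ * Λ ϑ)) ^ 2 := by
  have h1 : 0 < 1 - ε := by linarith
  have hr : ∀ ϑ, 0 < Real.sqrt (c ϑ * Λ ϑ) := fun ϑ =>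
    Real.sqrt_pos.2 (mul_pos (hc ϑ) (hΛ ϑ))
  have hsq : ∀ ϑ, Real.sqrt (c ϑ * Λ ϑ) ^ 2 = c ϑ * Λ ϑ := fun ϑ =>
    Real.sq_sqrt (mul_pos (hc ϑ) (hΛ ϑ)).le
  constructor
  · rintro ⟨μ, hμ, hstab, hbud⟩
    have hcs : (∑ ϑ, Real.sqrt (c ϑ * Λ ϑ)) ^ 2 ≤ (∑ ϑ, Λ ϑ / μ ϑ) * ∑ ϑ, c ϑ * μ ϑ := by
      refine Finset.sum_sq_le_sum_mul_sum_of_sq_le_mul _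
        (fun ϑ _ => (div_pos (hΛ ϑ) (hμ ϑ)).le) (fun ϑ _ => (mul_pos (hc ϑ) (hμ ϑ)).le) ?_
      refine fun ϑ _ => le_of_eq ?_
      have := (hμ ϑ).ne'
      rw [hsq]
      field_simp
    have hcost : 0 ≤ ∑ ϑ, c ϑ * μ ϑ :=
      Finset.sum_nonneg fun ϑ _ => (mul_pos (hc ϑ) (hμ ϑ)).le
    have hle : (∑ ϑ, Real.sqrt (c ϑ * Λ ϑ)) ^ 2 ≤ (1 - ε) * Γ :=
      hcs.trans (mul_le_mul hstab hbud hcost h1.le)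
    rw [ge_iff_le, one_div, inv_mul_le_iff₀ h1]
    exact hle
  · intro hΓ
    set S := ∑ ϑ, Real.sqrt (c ϑ * Λ ϑ) with hS
    have hSpos : 0 < S := Finset.sum_pos (fun ϑ _ => hr ϑ) Finset.univ_nonempty
    refine ⟨fun ϑ => S / (1 - ε) * (Real.sqrt (c ϑ * Λ ϑ) / c ϑ),
      fun ϑ => mul_pos (div_pos hSpos h1) (div_pos (hr ϑ) (hc ϑ)), le_of_eq ?_, ?_⟩
    · have hterm : ∀ ϑ, Λ ϑ / (S / (1 - ε) * (Real.sqrt (c ϑ * Λ ϑ) / c ϑ)) =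
          (1 - ε) / S * Real.sqrt (c ϑ * Λ ϑ) := by
        intro ϑ
        have hcϑ := hc ϑ
        have hrϑ := hr ϑ
        have hsqϑ := hsq ϑ
        generalize Real.sqrt (c ϑ * Λ ϑ) = r at hrϑ hsqϑ ⊢
        field_simp
        linarith
      simp only [hterm]
      rw [← Finset.mul_sum, ← hS, div_mul_cancel₀ _ hSpos.ne']
    · have hterm : ∀ ϑ, c ϑ * (S / (1 - ε) * (Real.sqrt (c ϑ * Λ ϑ) / c ϑ)) =
          S / (1 - ε) * Real.sqrt (c ϑ * Λ ϑ) := by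
        intro ϑ
        have := (hc ϑ).ne'
        field_simp
      simp only [hterm]
      rw [← Finset.mul_sum, ← hS]
      refine le_of_eq_of_le ?_ hΓ
      ring
end
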